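/- Adding a parallel bidirected edge between already bidirectedly connected strongly connected components preserves the E-separation model: let G = (V, E_d, E_bi) be a DMG and i, j ∈ V with i ≠ j, {i, j} ∉ E_bi, and i ∉ scc_G(j), and suppose there exist i′ ∈ scc_G(i) and j′ ∈ scc_G(j) with {i′, j′} ∈ E_bi; let G′ = (V, E_d, E_bi ∪ {{i, j}}). Then I_E^G = I_E^{G′}. -/

import Mathlib

namespace ESepPaper

/-- A directed mixed graph: directed edges and bidirected edges over a node type `V`.
A directed graph (DG) is a DMG with `Ebi = ∅`. -/
structure DMG (V : Type) where
  Ed : Set (V × V)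
  Ebi : Set (Sym2 V)

variable {V : Type}

/-- `G.ancestor u v` : there is a directed path `u → … → v` (possibly trivial). -/
def DMG.ancestor (G : DMG V) : V → V → Prop :=
  Relation.ReflTransGen (fun u v => (u, v) ∈ G.Ed)

/-- Ancestors of a set `C`. -/
def DMG.anc (G : DMG V) (C : Set V) : Set V := {u | ∃ v ∈ C, G.ancestor u v}

/-- Strongly connected component of `v`. -/
def DMG.scc (G : DMG V) (v : V) : Set V := {w | G.ancestor w v ∧ G.ancestor v w}

/-- Parents of a set of nodes. -/
def DMG.pa (G : DMG V) (S : Set V) : Set V := {w | ∃ v ∈ S, (w, v) ∈ G.Ed}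

/-- Kind of a traversed edge on a walk: forward directed, backward directed, or bidirected. -/
inductive LinkType | fwd | bwd | bi
deriving DecidableEq

/-- Validity of a link of kind `t` between consecutive walk nodes `u` and `v`. -/
def DMG.linkOK (G : DMG V) (u v : V) : LinkType → Prop
  | .fwd => (u, v) ∈ G.Ed
  | .bwd => (v, u) ∈ G.Ed
  | .bi => s(u, v) ∈ G.Ebi

/-- Arrowhead at the second (right) endpoint of the link. -/
def LinkType.headR : LinkType → Prop
  | .fwd => True
  | .bwd => False
  | .bi => True

/-- Arrowhead at the first (left) endpoint of the link. -/
def LinkType.headL : LinkType → Prop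
  | .fwd => False
  | .bwd => True
  | .bi => True

/-- Tail at the second (right) endpoint. -/
def LinkType.tailR (t : LinkType) : Prop := t = .bwd

/-- Tail at the first (left) endpoint. -/
def LinkType.tailL (t : LinkType) : Prop := t = .fwd

/-- Walks in a DMG. -/
inductive DMG.Walk (G : DMG V) : V → V → Type
  | nil (v : V) : DMG.Walk G v v
  | cons {u v w : V} (t : LinkType) (h : G.linkOK u v t) (p : DMG.Walk G v w) : DMG.Walk G u w

/-- An interior node on a walk, whose incoming link is `t1` and outgoing link is `t2`,
is a collider iff both links have an arrowhead at it. -/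
def colliderAt (t1 t2 : LinkType) : Prop := t1.headR ∧ t2.headL

/-- An interior non-collider `v` between neighbours `u` (incoming link `t1`) and `w`
(outgoing link `t2`) is unblockable: on every side where the link has a tail at `v`, the
corresponding neighbour lies in `scc_G(v)` (left-chain/right-chain/fork cases). -/
def unblockableAt (G : DMG V) (u v w : V) (t1 t2 : LinkType) : Prop :=
  (t1.tailR → u ∈ G.scc v) ∧ (t2.tailL → w ∈ G.scc v)

namespace DMG.Walk

variable {G : DMG V}

/-- First node of a walk. -/
def first {a b : V} (_ : G.Walk a b) : V := a

def length : {a b : V} → G.Walk a b → ℕ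
  | _, _, .nil _ => 0
  | _, _, .cons _ _ p => p.length + 1

def support : {a b : V} → G.Walk a b → List V
  | a, _, .nil _ => [a]
  | a, _, .cons _ _ p => a :: p.support

/-- Auxiliary: σ-openness of the remainder of a walk, where `u` is the previous node and
`t1` the link from `u` into the current first node. -/
def sigmaOpenAux (C : Set V) : (u : V) → LinkType → {b c : V} → G.Walk b c → Prop
  | _, _, _, _, .nil _ => True
  | u, t1, v, _, .cons t2 _ q =>
      ((colliderAt t1 t2 → v ∈ G.anc C) ∧
       (¬ colliderAt t1 t2 → ¬ unblockableAt G u v q.first t1 t2 → v ∉ C)) ∧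
      sigmaOpenAux C v t2 q

/-- The walk is σ-open given `C`: every collider on it is an ancestor of a node of `C`, and
no blockable non-collider on it lies in `C`. -/
def sigmaOpen (C : Set V) : {a b : V} → G.Walk a b → Prop
  | _, _, .nil _ => True
  | a, _, .cons t _ q => sigmaOpenAux C a t q

/-- All links are forward directed. -/
def IsDirected : {a b : V} → G.Walk a b → Prop
  | _, _, .nil _ => True
  | _, _, .cons t _ p => t = .fwd ∧ p.IsDirected

/-- Interior nodes of the walk (all nodes except the two endpoints). -/
def interior {a b : V} (p : G.Walk a b) : List V := p.support.tail.dropLast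

/-- Arrowhead at the first endpoint. -/
def headAtStart : {a b : V} → G.Walk a b → Prop
  | _, _, .nil _ => False
  | _, _, .cons t _ _ => t.headL

def headAtEndAux : LinkType → {a b : V} → G.Walk a b → Prop
  | t, _, _, .nil _ => t.headR
  | _, _, _, .cons t _ q => headAtEndAux t q

/-- Arrowhead at the last endpoint. -/
def headAtEnd : {a b : V} → G.Walk a b → Prop
  | _, _, .nil _ => False
  | _, _, .cons t _ q => headAtEndAux t q

def noCollidersAux : LinkType → {a b : V} → G.Walk a b → Prop
  | _, _, _, .nil _ => True
  | t1, _, _, .cons t2 _ q => ¬ colliderAt t1 t2 ∧ noCollidersAux t2 q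

/-- There is no collider on the walk. -/
def NoColliders : {a b : V} → G.Walk a b → Prop
  | _, _, .nil _ => True
  | _, _, .cons t _ q => noCollidersAux t q

def collidersInAux (S : Set V) : LinkType → {a b : V} → G.Walk a b → Prop
  | _, _, _, .nil _ => True
  | t1, v, _, .cons t2 _ q => (colliderAt t1 t2 → v ∈ S) ∧ collidersInAux S t2 q

/-- Every collider on the walk lies in `S`. -/
def CollidersIn (S : Set V) : {a b : V} → G.Walk a b → Prop
  | _, _, .nil _ => True
  | _, _, .cons t _ q => collidersInAux S t q

def noncollUnblAux : (u : V) → LinkType → {b c : V} → G.Walk b c → Prop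
  | _, _, _, _, .nil _ => True
  | u, t1, v, _, .cons t2 _ q =>
      (¬ colliderAt t1 t2 → unblockableAt G u v q.first t1 t2) ∧ noncollUnblAux v t2 q

/-- Every interior non-collider on the walk is unblockable. -/
def NoncollidersUnblockable : {a b : V} → G.Walk a b → Prop
  | _, _, .nil _ => True
  | a, _, .cons t _ q => noncollUnblAux a t q

/-- The set of edges occurring on a walk (directed edges as ordered pairs in `E_d`,
bidirected edges as unordered pairs). -/
def edges : {a b : V} → G.Walk a b → Set ((V × V) ⊕ Sym2 V)
  | _, _, .nil _ => ∅
  | a, _, .cons t _ p =>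
      insert (match t with
        | .fwd => Sum.inl (a, p.first)
        | .bwd => Sum.inl (p.first, a)
        | .bi => Sum.inr s(a, p.first)) p.edges

/-- Concatenation of walks. -/
def append : {a b c : V} → G.Walk a b → G.Walk b c → G.Walk a c
  | _, _, _, .nil _, q => q
  | _, _, _, .cons t h p, q => .cons t h (p.append q)

/-- A walk `v_0, …, v_{n+1}` is a path if no node besides the final endpoint occurs more
than once, i.e. `v_0, …, v_n` are pairwise distinct. -/
def IsPath {a b : V} (p : G.Walk a b) : Prop := p.support.dropLast.Nodup

end DMG.Walk

/-- `A` is σ-separated from `B` given `C` in `G`: every walk from a node of `A` to a node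
of `B` is σ-blocked given `C`. -/
def DMG.sigmaSep (G : DMG V) (A B C : Set V) : Prop :=
  ∀ a ∈ A, ∀ b ∈ B, ∀ p : G.Walk a b, ¬ p.sigmaOpen C

/-- The lifted dependency graph of `G`, on two copies of `V`
(`Sum.inl` is the past copy `V_0`, `Sum.inr` the future copy `V_1`). -/
def DMG.lift (G : DMG V) : DMG (V ⊕ V) where
  Ed := {e | ∃ u v, (u, v) ∈ G.Ed ∧
        (e = (Sum.inl u, Sum.inl v) ∨ e = (Sum.inl u, Sum.inr v) ∨
         e = (Sum.inr u, Sum.inr v))}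
  Ebi := {e | ∃ u v, s(u, v) ∈ G.Ebi ∧
        (e = s(Sum.inl u, Sum.inl v) ∨ e = s(Sum.inl u, Sum.inr v) ∨
         e = s(Sum.inr u, Sum.inl v) ∨ e = s(Sum.inr u, Sum.inr v))}

/-- `B` is E-separated from `A` given `C` in `G`:
`A_0` is σ-separated from `B_1` given `C_0 ∪ (C_1 \ B_1)` in the lifted dependency graph. -/
def DMG.ESep (G : DMG V) (A B C : Set V) : Prop :=
  G.lift.sigmaSep (Sum.inl '' A) (Sum.inr '' B)
    ((Sum.inl '' C) ∪ ((Sum.inr '' C) \ (Sum.inr '' B)))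

/-- The independence model `I_E^G` of E-separation triples. -/
def DMG.IE (G : DMG V) : Set (Set V × Set V × Set V) :=
  {t | G.ESep t.1 t.2.1 t.2.2}


/-- The latent projection of `G` onto the observed nodes `O`: a directed edge when there is
a non-trivial directed walk whose interior nodes are all latent, and a bidirected edge when
there is a non-trivial collider-free walk with arrowheads at both endpoints whose interior
nodes are all latent. -/
def DMG.latentProj (G : DMG V) (O : Set V) : DMG O where
  Ed := {e | ∃ p : G.Walk e.1.val e.2.val,
          p.IsDirected ∧ 0 < p.length ∧ ∀ x ∈ p.interior, x ∉ O}
  Ebi := {e | ∃ u v : O, e = s(u, v) ∧ ∃ p : G.Walk u.val v.val,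
          p.headAtStart ∧ p.headAtEnd ∧ p.NoColliders ∧ 0 < p.length ∧
          ∀ x ∈ p.interior, x ∉ O}

/-- The last edge of the walk `p` before entering `scc_G(w)` has an arrowhead at its
endpoint in `scc_G(w)` (vacuous if the walk never leaves `scc_G(w)`). -/
def DMG.lastEdgeInto (G : DMG V) {a b : V} (w : V) (p : G.Walk a b) : Prop :=
  (∀ x ∈ p.support, x ∈ G.scc w) ∨
  ∃ (x y : V) (t : LinkType) (h : G.linkOK x y t) (p₁ : G.Walk a x) (p₂ : G.Walk y b),
    p = p₁.append (.cons t h p₂) ∧ x ∉ G.scc w ∧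
    (∀ z ∈ p₂.support, z ∈ G.scc w) ∧ t.headR

/-- An (asymmetric) inducing path from `v` to `w`: a non-trivial path such that every
collider on it is an ancestor of `v` or `w`, every interior non-collider is unblockable,
and the last edge before entering `scc_G(w)` points into `scc_G(w)`. -/
def DMG.IsInducingPath (G : DMG V) {v w : V} (p : G.Walk v w) : Prop :=
  0 < p.length ∧ p.IsPath ∧
  p.CollidersIn (G.anc {v, w}) ∧ p.NoncollidersUnblockable ∧ G.lastEdgeInto w p

section helper
variable {W : Type}

theorem hlp_aux_congr {H : DMG W} (C : Set W) {b c : W} (q : H.Walk b c) (u u2 : W)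
    (t1 t2 : LinkType) (h1 : t1.headR) (h2 : t2.headR)
    (h : DMG.Walk.sigmaOpenAux C u t1 q) : DMG.Walk.sigmaOpenAux C u2 t2 q := by
  cases q with
  | nil => trivial
  | cons t hl r =>
    obtain ⟨⟨ha, hb⟩, hr⟩ := h
    refine ⟨⟨fun hc => ha ⟨h1, hc.2⟩, fun hc hu => hb (fun hc' => hc ⟨h2, hc'.2⟩) ?_⟩, hr⟩
    intro hu'
    refine hu ⟨?_, hu'.2⟩
    intro ht
    unfold LinkType.tailR at ht
    subst ht
    exact h2.elim

theorem hlp_fwd {H : DMG W} (C : Set W) {v c : W} (u : W) (r : H.Walk v c)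
    (h : DMG.Walk.sigmaOpenAux C u .bi r) {x : W} (hx : H.ancestor x v) :
    H.ancestor v x →
    ∃ r' : H.Walk x c, ∀ u2, DMG.Walk.sigmaOpenAux C u2 .bi r' := by
  induction hx using Relation.ReflTransGen.head_induction_on with
  | refl => exact fun _ => ⟨r, fun u2 => hlp_aux_congr C r u u2 .bi .bi trivial trivial h⟩
  | head hxy hyv ih =>
    rename_i x y
    intro hvx
    obtain ⟨r', hr'⟩ := ih (Relation.ReflTransGen.tail hvx hxy)
    refine ⟨.cons .fwd hxy r', fun u2 => ⟨⟨fun hc => hc.2.elim, fun _ hu => ?_⟩,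
      hlp_aux_congr C r' x x .bi .fwd trivial trivial (hr' x)⟩⟩
    exact (hu ⟨fun ht => (by cases ht),
      fun _ => ⟨Relation.ReflTransGen.trans hyv hvx, Relation.ReflTransGen.single hxy⟩⟩).elim

theorem hlp_bwd {H : DMG W} (C : Set W) {x y c : W} (hxy : H.ancestor x y) :
    H.ancestor y x →
    (∃ (t : LinkType) (z : W) (_ : H.linkOK x z t) (r : H.Walk z c), t.headL ∧
      DMG.Walk.sigmaOpenAux C x t r) →
    ∃ (t : LinkType) (z : W) (_ : H.linkOK y z t) (r : H.Walk z c), t.headL ∧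
      DMG.Walk.sigmaOpenAux C y t r := by
  induction hxy with
  | refl => exact fun _ h => h
  | tail hxy hyz ih =>
    rename_i y z
    intro hzx h
    obtain ⟨t, w, hl, r, ht, hr⟩ := ih (Relation.ReflTransGen.head hyz hzx) h
    refine ⟨.bwd, y, hyz, .cons t hl r, trivial, ⟨fun hc => hc.1.elim, fun _ hu => ?_⟩, hr⟩
    refine (hu ⟨fun _ => ⟨Relation.ReflTransGen.trans hzx hxy,
      Relation.ReflTransGen.single hyz⟩, fun ht' => ?_⟩).elim
    unfold LinkType.tailL at ht'
    subst ht'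
    exact ht.elim

theorem hlp_bi {E : Set (W × W)} {B B' : Set (Sym2 W)} (C : Set W)
    (hB : ∀ x y, s(x, y) ∈ B' → ∃ x' ∈ (DMG.mk E B).scc x, ∃ y' ∈ (DMG.mk E B).scc y,
      s(x', y') ∈ B) {b v c : W} (h : s(b, v) ∈ B') (r : (DMG.mk E B).Walk v c)
    (hr : DMG.Walk.sigmaOpenAux C b .bi r) :
    ∃ (t : LinkType) (z : W) (_ : (DMG.mk E B).linkOK b z t) (r : (DMG.mk E B).Walk z c),
      t.headL ∧ DMG.Walk.sigmaOpenAux C b t r := by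
  obtain ⟨x', hx, y', hy, hxy⟩ := hB b v h
  obtain ⟨r', hr'⟩ := hlp_fwd C b r hr hy.1 hy.2
  exact hlp_bwd C hx.1 hx.2 ⟨.bi, y', hxy, r', trivial, hr' x'⟩

theorem hlp_main {E : Set (W × W)} {B B' : Set (Sym2 W)} (C : Set W)
    (hB : ∀ x y, s(x, y) ∈ B' → ∃ x' ∈ (DMG.mk E B).scc x, ∃ y' ∈ (DMG.mk E B).scc y,
      s(x', y') ∈ B) {b c : W} (q : (DMG.mk E B').Walk b c) :
    ∀ u t1, DMG.Walk.sigmaOpenAux C u t1 q →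
      ∃ q' : (DMG.mk E B).Walk b c, DMG.Walk.sigmaOpenAux C u t1 q' := by
  induction q with
  | nil v => exact fun u t1 _ => ⟨.nil v, trivial⟩
  | cons t2 h r ih =>
    rename_i b v c
    intro u t1 hq
    obtain ⟨⟨ha, hb⟩, hr⟩ := hq
    obtain ⟨r', hr'⟩ := ih b t2 hr
    cases t2 with
    | fwd => exact ⟨.cons .fwd h r', ⟨ha, hb⟩, hr'⟩
    | bwd => exact ⟨.cons .bwd h r', ⟨ha, hb⟩, hr'⟩
    | bi =>
      obtain ⟨t, z, hl, w, ht, hw⟩ := hlp_bi C hB h r' hr'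
      refine ⟨.cons t hl w, ⟨fun hc => ha ⟨hc.1, trivial⟩, fun hc hu =>
        hb (fun hc' => hc ⟨hc'.1, ht⟩) fun hu' => hu ⟨hu'.1, fun ht' => ?_⟩⟩, hw⟩
      unfold LinkType.tailL at ht'
      subst ht'
      exact ht.elim

theorem hlp_sep {E : Set (W × W)} {B B' : Set (Sym2 W)} (A D C : Set W)
    (hB : ∀ x y, s(x, y) ∈ B' → ∃ x' ∈ (DMG.mk E B).scc x, ∃ y' ∈ (DMG.mk E B).scc y,
      s(x', y') ∈ B) (hs : (DMG.mk E B).sigmaSep A D C) : (DMG.mk E B').sigmaSep A D C := by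
  intro a ha d hd p hp
  cases p with
  | nil => exact hs a ha a hd (.nil a) trivial
  | cons t h r =>
    obtain ⟨r', hr'⟩ := hlp_main C hB r a t hp
    cases t with
    | fwd => exact hs a ha d hd (.cons .fwd h r') hr'
    | bwd => exact hs a ha d hd (.cons .bwd h r') hr'
    | bi =>
      obtain ⟨t, z, hl, w, ht, hw⟩ := hlp_bi C hB h r' hr'
      exact hs a ha d hd (.cons t hl w) hw

theorem hlp_scc_inl (G : DMG W) {u v : W} (h : u ∈ G.scc v) :
    (Sum.inl u : W ⊕ W) ∈ G.lift.scc (Sum.inl v) :=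
  ⟨Relation.ReflTransGen.lift Sum.inl (fun a b hab => ⟨a, b, hab, Or.inl rfl⟩) _ _ h.1,
   Relation.ReflTransGen.lift Sum.inl (fun a b hab => ⟨a, b, hab, Or.inl rfl⟩) _ _ h.2⟩

theorem hlp_scc_inr (G : DMG W) {u v : W} (h : u ∈ G.scc v) :
    (Sum.inr u : W ⊕ W) ∈ G.lift.scc (Sum.inr v) :=
  ⟨Relation.ReflTransGen.lift Sum.inr (fun a b hab => ⟨a, b, hab, Or.inr (Or.inr rfl)⟩) _ _ h.1,
   Relation.ReflTransGen.lift Sum.inr (fun a b hab => ⟨a, b, hab, Or.inr (Or.inr rfl)⟩) _ _ h.2⟩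

theorem hlp_lift {E : Set (W × W)} {B B' : Set (Sym2 W)}
    (hB : ∀ x y, s(x, y) ∈ B' → ∃ x' ∈ (DMG.mk E B).scc x, ∃ y' ∈ (DMG.mk E B).scc y,
      s(x', y') ∈ B) (x y : W ⊕ W) (h : s(x, y) ∈ (DMG.mk E B').lift.Ebi) :
    ∃ x' ∈ (DMG.mk E B).lift.scc x, ∃ y' ∈ (DMG.mk E B).lift.scc y,
      s(x', y') ∈ (DMG.mk E B).lift.Ebi := by
  obtain ⟨u, v, huv, h⟩ := h
  obtain ⟨u', hu, v', hv, h'⟩ := hB u v huv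
  have hu0 := hlp_scc_inl _ hu
  have hu1 := hlp_scc_inr _ hu
  have hv0 := hlp_scc_inl _ hv
  have hv1 := hlp_scc_inr _ hv
  rcases h with h | h | h | h <;> rcases Sym2.eq_iff.1 h with ⟨rfl, rfl⟩ | ⟨rfl, rfl⟩
  · exact ⟨_, hu0, _, hv0, u', v', h', by simp⟩
  · exact ⟨_, hv0, _, hu0, u', v', h', by simp⟩
  · exact ⟨_, hu0, _, hv1, u', v', h', by simp⟩
  · exact ⟨_, hv1, _, hu0, u', v', h', by simp⟩
  · exact ⟨_, hu1, _, hv0, u', v', h', by simp⟩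
  · exact ⟨_, hv0, _, hu1, u', v', h', by simp⟩
  · exact ⟨_, hu1, _, hv1, u', v', h', by simp⟩
  · exact ⟨_, hv1, _, hu1, u', v', h', by simp⟩

theorem hlp_esep {E : Set (W × W)} {B B' : Set (Sym2 W)}
    (hB : ∀ x y, s(x, y) ∈ B' → ∃ x' ∈ (DMG.mk E B).scc x, ∃ y' ∈ (DMG.mk E B).scc y,
      s(x', y') ∈ B) (A D C : Set W) (hs : (DMG.mk E B).ESep A D C) :
    (DMG.mk E B').ESep A D C :=
  hlp_sep (E := (DMG.mk E B).lift.Ed) (B := (DMG.mk E B).lift.Ebi)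
    (B' := (DMG.mk E B').lift.Ebi) _ _ _ (hlp_lift hB) hs

end helper

/-- Adding a parallel bidirected edge between strongly connected components that are
already bidirectedly connected preserves the E-separation independence model. -/
theorem add_parallel_bidirected_edge {V : Type} [Fintype V] (G : DMG V)
    (i j : V) (hij : i ≠ j) (hbi : s(i, j) ∉ G.Ebi) (hscc : i ∉ G.scc j)
    (i' : V) (hi' : i' ∈ G.scc i) (j' : V) (hj' : j' ∈ G.scc j)
    (h' : s(i', j') ∈ G.Ebi) :
    G.IE = (DMG.mk G.Ed (insert s(i, j) G.Ebi)).IE := by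
  obtain ⟨E, B⟩ := G
  ext ⟨A, D, C⟩
  constructor
  · refine hlp_esep ?_ A D C
    intro x y hxy
    rcases hxy with hxy | hxy
    · rcases Sym2.eq_iff.1 hxy with ⟨rfl, rfl⟩ | ⟨rfl, rfl⟩
      · exact ⟨i', hi', j', hj', h'⟩
      · exact ⟨j', hj', i', hi', by rw [Sym2.eq_swap]; exact h'⟩
    · exact ⟨x, ⟨.refl, .refl⟩, y, ⟨.refl, .refl⟩, hxy⟩
  · refine hlp_esep ?_ A D C
    intro x y hxy
    exact ⟨x, ⟨.refl, .refl⟩, y, ⟨.refl, .refl⟩, Or.inr hxy⟩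

end ESepPaper
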